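/- Let U ⊆ Σ(X,P) be a set containing at least one element of ℬ_i for every i with 1 ≤ i ≤ r−1, and at least one element of 𝒞_i for every i ∈ {1,…,r} such that either i = 1 and d_1 ≥ 2, or i ≥ 2 and d_i − d_{i−1} ≥ 2. Then S(X,P) ∪ U generates the monoid Σ(X,P). -/

import Mathlib

open Function Set

/-- The monoid (as a subset of `Function.End X`) of all transformations preserving
the partition induced by the equivalence relation `r`. -/
def TSet {X : Type*} (r : Setoid X) : Set (Function.End X) :=
  {f | ∀ x y : X, r x y → r (f x) (f y)}

/-- The group of units of `TSet r` (i.e. `S(X,P)`): the permutations `g` of `X` with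
`x ∼ y ↔ g x ∼ g y`. -/
def SXP {X : Type*} (r : Setoid X) : Set (Function.End X) :=
  {f | Function.Bijective f ∧ ∀ x y : X, r (f x) (f y) ↔ r x y}

/-- The submonoid (as a subset) of transformations preserving the partition whose
image meets every block of the partition. -/
def SigmaSet {X : Type*} (r : Setoid X) : Set (Function.End X) :=
  {f | f ∈ TSet r ∧ ∀ B ∈ Setoid.classes r, (Set.range f ∩ B).Nonempty}

/-- The number of blocks of the partition having size `s`. -/
noncomputable def blockCount {X : Type*} (r : Setoid X) (s : ℕ) : ℕ :=
  {B | B ∈ Setoid.classes r ∧ B.ncard = s}.ncard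

/-- Membership in `ℬᵢ`, where `a = dᵢ` and `b = d_{i+1}` are consecutive distinct
block sizes: `f ∈ Σ(X,P)`, and there are blocks `B, B'` of size `a` and `C, C'`
of size `b` such that `f` maps `B` injectively into `C`, maps `C'` onto `B'`, and
maps every other block bijectively onto a block of the same size. -/
def memB {X : Type*} (r : Setoid X) (a b : ℕ) (f : Function.End X) : Prop :=
  f ∈ SigmaSet r ∧
    ∃ B B' C C' : Set X,
      B ∈ Setoid.classes r ∧ B' ∈ Setoid.classes r ∧
      C ∈ Setoid.classes r ∧ C' ∈ Setoid.classes r ∧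
      B.ncard = a ∧ B'.ncard = a ∧ C.ncard = b ∧ C'.ncard = b ∧
      Set.InjOn f B ∧ f '' B ⊆ C ∧ f '' C' = B' ∧
      ∀ D ∈ Setoid.classes r, D ≠ B → D ≠ C' →
        ∃ E ∈ Setoid.classes r, f '' D = E ∧ Set.InjOn f D ∧ E.ncard = D.ncard

/-- Membership in `𝒞ᵢ`, where `s = dᵢ` is a block size: `f ∈ Σ(X,P)`, `f` maps
every block into a block of the same size, there is one block of size `s` whose
image under `f` has size `s - 1`, and `f` is injective on every other block. -/
def memC {X : Type*} (r : Setoid X) (s : ℕ) (f : Function.End X) : Prop :=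
  f ∈ SigmaSet r ∧
    (∀ D ∈ Setoid.classes r, ∃ E ∈ Setoid.classes r, E.ncard = D.ncard ∧ f '' D ⊆ E) ∧
    ∃ B ∈ Setoid.classes r, B.ncard = s ∧ (f '' B).ncard = s - 1 ∧
      ∀ D ∈ Setoid.classes r, D ≠ B → Set.InjOn f D

/-- The block with index `q`. -/
def blk {X : Type*} (r : Setoid X) (q : Quotient r) : Set X := {x | Quotient.mk r x = q}

/-- `f` acts on the blocks through `π`. -/
def Act {X : Type*} (r : Setoid X) (f : Function.End X) (π : Equiv.Perm (Quotient r)) : Prop :=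
  ∀ x, Quotient.mk r (f x) = π (Quotient.mk r x)

set_option linter.unusedSectionVars false

/-- Change the value at one point. -/
def upd {X : Type*} [DecidableEq X] (f : Function.End X) (a c : X) : Function.End X :=
  fun x => if x = a then c else f x

/-- The idempotent sending `a` to `b` and fixing everything else. -/
def idm {X : Type*} [DecidableEq X] (a b : X) : Function.End X :=
  fun x => if x = a then b else x

theorem upd_self {X : Type*} [DecidableEq X] (f : Function.End X) (a c : X) :
    upd f a c a = c := if_pos rfl

theorem upd_ne {X : Type*} [DecidableEq X] {f : Function.End X} {a c x : X} (h : x ≠ a) :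
    upd f a c x = f x := if_neg h

theorem idm_self {X : Type*} [DecidableEq X] (a b : X) :
    idm a b a = b := if_pos rfl

theorem idm_ne {X : Type*} [DecidableEq X] {a b x : X} (h : x ≠ a) :
    idm a b x = x := if_neg h

section helpers

variable {X : Type*} [Fintype X] {r : Setoid X}

theorem mem_blk {x : X} {q : Quotient r} : x ∈ blk r q ↔ Quotient.mk r x = q := Iff.rfl

theorem mem_classes_iff {B : Set X} : B ∈ Setoid.classes r ↔ ∃ q, B = blk r q := by
  constructor
  · rintro ⟨y, rfl⟩
    refine ⟨Quotient.mk r y, ?_⟩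
    ext x
    simp only [blk, Set.mem_ofPred_eq]
    exact Quotient.eq.symm
  · rintro ⟨q, rfl⟩
    induction q using Quotient.inductionOn with
    | h y =>
      refine ⟨y, ?_⟩
      ext x
      simp only [blk, Set.mem_ofPred_eq]
      exact Quotient.eq

theorem blk_nonempty (q : Quotient r) : (blk r q).Nonempty := by
  obtain ⟨x, rfl⟩ := Quotient.exists_rep q
  exact ⟨x, rfl⟩

theorem blk_inj {p q : Quotient r} (h : blk r p = blk r q) : p = q := by
  obtain ⟨x, hx⟩ := blk_nonempty p
  have h2 : x ∈ blk r q := h ▸ hx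
  exact hx.symm.trans h2

theorem sigma_iff {f : Function.End X} : f ∈ SigmaSet r ↔ ∃ π, Act r f π := by
  classical
  constructor
  · rintro ⟨hT, hB⟩
    let g : Quotient r → Quotient r := Quotient.map f (fun a b h => hT a b h)
    have hs : Function.Surjective g := by
      intro q
      obtain ⟨y, ⟨x, rfl⟩, hy⟩ := hB (blk r q) (mem_classes_iff.2 ⟨q, rfl⟩)
      exact ⟨Quotient.mk r x, hy⟩
    have hb : Function.Bijective g := ⟨Finite.injective_iff_surjective.2 hs, hs⟩
    exact ⟨Equiv.ofBijective g hb, fun x => rfl⟩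
  · rintro ⟨π, h⟩
    refine ⟨fun x y hxy => ?_, fun B hB => ?_⟩
    · apply Quotient.eq.1
      rw [h, h]
      congr 1
      exact Quotient.sound hxy
    · obtain ⟨q, rfl⟩ := mem_classes_iff.1 hB
      obtain ⟨x, hx⟩ := blk_nonempty (π.symm q)
      refine ⟨f x, ⟨x, rfl⟩, ?_⟩
      rw [mem_blk, h, mem_blk.1 hx, Equiv.apply_symm_apply]

theorem sxp_iff {f : Function.End X} : f ∈ SXP r ↔ Function.Bijective f ∧ ∃ π, Act r f π := by
  constructor
  · rintro ⟨h1, h2⟩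
    refine ⟨h1, sigma_iff.1 ⟨fun x y h => (h2 x y).2 h, fun B hB => ?_⟩⟩
    obtain ⟨q, rfl⟩ := mem_classes_iff.1 hB
    obtain ⟨x, hx⟩ := blk_nonempty q
    exact ⟨x, h1.2 x, hx⟩
  · rintro ⟨h1, π, h⟩
    refine ⟨h1, fun x y => ?_⟩
    have h3 : Quotient.mk r (f x) = Quotient.mk r (f y) ↔ Quotient.mk r x = Quotient.mk r y := by
      rw [h, h, π.injective.eq_iff]
    exact Quotient.eq.symm.trans (h3.trans Quotient.eq)

theorem Act.mul {f g : Function.End X} {π ρ : Equiv.Perm (Quotient r)}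
    (hf : Act r f π) (hg : Act r g ρ) : Act r (f * g) (π * ρ) := by
  intro x
  show Quotient.mk r (f (g x)) = _
  rw [hf, hg]; rfl

theorem Act.inv {u v : Function.End X} {π : Equiv.Perm (Quotient r)}
    (hf : Act r u π) (h : ∀ x, u (v x) = x) : Act r v π⁻¹ := by
  intro x
  rw [Equiv.Perm.eq_inv_iff_eq, ← hf, h]

theorem sxp_inv {u : Function.End X} {π : Equiv.Perm (Quotient r)} (hu : u ∈ SXP r)
    (ha : Act r u π) :
    ∃ v ∈ SXP r, Act r v π⁻¹ ∧ (∀ x, u (v x) = x) ∧ ∀ x, v (u x) = x := by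
  have hb := (sxp_iff.1 hu).1
  let e := Equiv.ofBijective u hb
  have h1 : ∀ x, u (e.symm x) = x := fun x => e.apply_symm_apply x
  have h2 : ∀ x, e.symm (u x) = x := fun x => e.symm_apply_apply x
  have h3 : Act r (e.symm : X → X) π⁻¹ := ha.inv h1
  exact ⟨(e.symm : X → X), sxp_iff.2 ⟨e.symm.bijective, _, h3⟩, h3, h1, h2⟩

/-- Extension of a partial injective map to a unit. -/
theorem exists_unit (π : Equiv.Perm (Quotient r))
    (hsz : ∀ q, (blk r (π q)).ncard = (blk r q).ncard) (f : X → X) (A : Set X)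
    (hA : ∀ x ∈ A, Quotient.mk r (f x) = π (Quotient.mk r x)) (hinj : Set.InjOn f A) :
    ∃ u ∈ SXP r, Act r u π ∧ ∀ x ∈ A, u x = f x := by
  classical
  have key : ∀ q : Quotient r, ∃ g : blk r q ≃ (blk r (π q)).toFinset,
      ∀ i : blk r q, (i : X) ∈ A → (g i : X) = f i := by
    intro q
    have hc : Fintype.card (blk r q) = ((blk r (π q)).toFinset).card := by
      rw [← Set.ncard_eq_toFinset_card', hsz, Set.ncard_eq_toFinset_card', Set.toFinset_card]
    obtain ⟨g, hg⟩ := Set.MapsTo.exists_equiv_extend_of_card_eq hc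
      (s := {i : blk r q | (i : X) ∈ A}) (f := fun i => f i)
      (by
        intro i hi
        simp only [Set.coe_toFinset]
        rw [mem_blk, hA _ hi]
        congr 1
        exact i.2)
      (by
        intro i hi j hj hij
        exact Subtype.ext (hinj hi hj hij))
    exact ⟨g, fun i hi => hg i hi⟩
  choose g hg using key
  let u : Function.End X := fun x => (g (Quotient.mk r x) ⟨x, rfl⟩ : X)
  have hu : Act r u π := by
    intro x
    have := (g (Quotient.mk r x) ⟨x, rfl⟩).2
    rw [Set.mem_toFinset] at this
    exact this
  have aux : ∀ q x y (hx : x ∈ blk r q) (hy : y ∈ blk r q),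
      (g q ⟨x, hx⟩ : X) = g q ⟨y, hy⟩ → x = y := by
    intro q x y hx hy h
    have := (g q).injective (Subtype.ext h)
    exact congrArg Subtype.val this
  have hinju : Function.Injective u := by
    intro x y hxy
    have h1 : Quotient.mk r x = Quotient.mk r y := by
      apply π.injective
      rw [← hu, ← hu, hxy]
    have h2 : ∀ q (hy : y ∈ blk r q), q = Quotient.mk r y → (g q ⟨y, hy⟩ : X) = u y := by
      rintro q hy rfl
      rfl
    exact aux (Quotient.mk r x) x y rfl h1.symm (hxy.trans (h2 _ _ h1).symm)
  refine ⟨u, sxp_iff.2 ⟨Finite.injective_iff_bijective.1 hinju, π, hu⟩, hu, fun x hx => ?_⟩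
  exact hg (Quotient.mk r x) ⟨x, rfl⟩ hx

theorem update_act {a b : X} [DecidableEq X] (h : Quotient.mk r a = Quotient.mk r b) :
    Act r (idm a b) 1 := by
  intro x
  by_cases hx : x = a
  · subst hx; simp [h, idm_self]
  · simp [idm_ne hx]

variable {M : Submonoid (Function.End X)}

theorem drop_idem [DecidableEq X] (hS : SXP r ⊆ M) {f : Function.End X} (hfM : f ∈ M)
    {π : Equiv.Perm (Quotient r)} (hf : Act r f π) (q : Quotient r)
    (hq : (blk r (π q)).ncard = (blk r q).ncard)
    (hd : (f '' blk r q).ncard + 1 = (blk r q).ncard)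
    (hi : ∀ p, p ≠ q → Set.InjOn f (blk r p)) :
    ∃ a ∈ blk r q, ∃ b ∈ blk r q, a ≠ b ∧ (idm a b) ∈ M := by
  have hni : ¬ Set.InjOn f (blk r q) := by
    intro h
    rw [Set.InjOn.ncard_image h] at hd
    omega
  simp only [Set.InjOn, not_forall] at hni
  obtain ⟨a, ha, b, hb, hfab, hab⟩ := hni
  have himg : f '' (blk r q \ {a}) = f '' blk r q := by
    apply Set.Subset.antisymm (Set.image_mono Set.sdiff_subset)
    rintro _ ⟨x, hx, rfl⟩
    by_cases hxa : x = a
    · subst hxa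
      exact ⟨b, ⟨hb, fun h => hab h.symm⟩, hfab.symm⟩
    · exact ⟨x, ⟨hx, hxa⟩, rfl⟩
  have hinj : Set.InjOn f (blk r q \ {a}) := by
    refine Set.injOn_of_ncard_image_eq ?_ (Set.toFinite _)
    rw [himg]
    have := Set.ncard_sdiff_singleton_add_one ha
    omega
  have hsub : f '' blk r q ⊆ blk r (π q) := by
    rintro _ ⟨x, hx, rfl⟩
    rw [mem_blk, hf, mem_blk.1 hx]
  obtain ⟨c, hc, hcn⟩ : ∃ c ∈ blk r (π q), c ∉ f '' blk r q := by
    refine Set.exists_mem_notMem_of_ncard_lt_ncard ?_ (Set.toFinite _)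
    omega
  have hcr : ∀ x, f x ≠ c := by
    intro x hx
    apply hcn
    refine ⟨x, ?_, hx⟩
    apply π.injective
    rw [← hf, hx]
    exact hc
  obtain ⟨u, huS, hu, hue⟩ : ∃ u ∈ SXP r, Act r u π ∧ ∀ x, u x = upd f a c x := by
    have h1 : Act r (upd f a c) π := by
      intro x
      by_cases hx : x = a
      · subst hx
        rw [upd_self, mem_blk.1 hc, mem_blk.1 ha]
      · rw [upd_ne hx, hf]
    refine ⟨(upd f a c), ?_, h1, fun _ => rfl⟩
    refine sxp_iff.2 ⟨Finite.injective_iff_bijective.1 ?_, π, h1⟩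
    intro x y hxy
    by_cases hx : x = a
    · by_cases hy : y = a
      · rw [hx, hy]
      · rw [hx, upd_self, upd_ne hy] at hxy
        exact (hcr y hxy.symm).elim
    · by_cases hy : y = a
      · rw [hy, upd_self, upd_ne hx] at hxy
        exact (hcr x hxy).elim
      · rw [upd_ne hx, upd_ne hy] at hxy
        have hm : Quotient.mk r x = Quotient.mk r y := by
          apply π.injective
          rw [← hf, ← hf, hxy]
        by_cases hxq : Quotient.mk r x = q
        · exact hinj ⟨hxq, hx⟩ ⟨hm.symm.trans hxq, hy⟩ hxy
        · exact hi _ hxq rfl hm.symm hxy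
  obtain ⟨v, hvS, hv, huv, hvu⟩ := sxp_inv huS hu
  refine ⟨a, ha, b, hb, hab, ?_⟩
  have : (idm a b) = v * f := by
    funext x
    show _ = v (f x)
    by_cases hx : x = a
    · subst hx
      rw [idm_self, hfab]
      have := hvu b
      rw [hue, upd_ne (Ne.symm hab)] at this
      exact this.symm
    · rw [idm_ne hx]
      have := hvu x
      rw [hue, upd_ne hx] at this
      exact this.symm
  rw [this]
  exact M.mul_mem (hS hvS) hfM

theorem idem_transport [DecidableEq X] (hS : SXP r ⊆ M) {a b : X} (hab : a ≠ b)
    (hr : Quotient.mk r a = Quotient.mk r b)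
    (hM : (idm a b) ∈ M) {x y : X} (hxy : x ≠ y)
    (hr' : Quotient.mk r x = Quotient.mk r y)
    (hc : (blk r (Quotient.mk r x)).ncard = (blk r (Quotient.mk r a)).ncard) :
    (idm x y) ∈ M := by
  classical
  obtain ⟨u, huS, hu, hue⟩ := exists_unit (r := r)
    (Equiv.swap (Quotient.mk r x) (Quotient.mk r a))
    (by
      intro q
      by_cases h1 : q = Quotient.mk r x
      · rw [h1, Equiv.swap_apply_left, hc]
      · by_cases h2 : q = Quotient.mk r a
        · rw [h2, Equiv.swap_apply_right, hc]
        · rw [Equiv.swap_apply_of_ne_of_ne h1 h2])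
    (fun z => if z = x then a else b) {x, y}
    (by
      rintro z (rfl | rfl)
      · simp
      · rw [if_neg (Ne.symm hxy), ← hr', Equiv.swap_apply_left, hr])
    (by
      rintro z (rfl | rfl) w (rfl | rfl) h
      · rfl
      · simp [Ne.symm hxy, hab] at h
      · simp [Ne.symm hxy, Ne.symm hab] at h
      · rfl)
  obtain ⟨v, hvS, hv, huv, hvu⟩ := sxp_inv huS hu
  have hux : u x = a := by rw [hue x (by simp)]; simp
  have huy : u y = b := by rw [hue y (by simp)]; simp [Ne.symm hxy]
  have : (idm x y) = v * (idm a b) * u := by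
    funext z
    show _ = v ((idm a b) (u z))
    by_cases hz : z = x
    · subst hz
      rw [idm_self, hux, idm_self, ← huy, hvu]
    · have : u z ≠ a := by
        intro h
        apply hz
        rw [← hvu z, h, ← hux, hvu]
      rw [idm_ne hz, idm_ne this]
      exact (hvu z).symm
  rw [this]
  exact M.mul_mem (M.mul_mem (hS hvS) hM) (hS huS)

/-- All block-fixing maps are generated, given all idempotents of defect one. -/
theorem fix_mem [DecidableEq X] (hS : SXP r ⊆ M)
    (hI : ∀ x y : X, x ≠ y → Quotient.mk r x = Quotient.mk r y →
      (idm x y) ∈ M)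
    (f : Function.End X) (hf : Act r f 1) : f ∈ M := by
  induction hn : (Set.range f)ᶜ.ncard using Nat.strong_induction_on generalizing f with
  | _ n ih =>
  by_cases hinj : Function.Injective f
  · exact hS (sxp_iff.2 ⟨Finite.injective_iff_bijective.1 hinj, 1, hf⟩)
  · simp only [Function.Injective, not_forall] at hinj
    obtain ⟨a, b, hfab, hab⟩ := hinj
    have hm : Quotient.mk r a = Quotient.mk r b := by
      have h1 := hf a
      have h2 := hf b
      rw [hfab, h2] at h1
      exact h1.symm
    obtain ⟨c, hc, hcn⟩ : ∃ c ∈ blk r (Quotient.mk r a), c ∉ f '' blk r (Quotient.mk r a) := by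
      refine Set.exists_mem_notMem_of_ncard_lt_ncard ?_ (Set.toFinite _)
      apply lt_of_le_of_ne (Set.ncard_image_le (Set.toFinite _))
      intro h
      exact hab (Set.injOn_of_ncard_image_eq h (Set.toFinite _) rfl hm.symm hfab)
    have hcr : ∀ x, f x ≠ c := by
      intro x hx
      apply hcn
      refine ⟨x, ?_, hx⟩
      have h1 := hf x
      rw [hx, mem_blk.1 hc] at h1
      exact h1.symm
    have hf' : Act r (upd f a c) 1 := by
      intro x
      by_cases hx : x = a
      · subst hx
        rw [upd_self, mem_blk.1 hc]; rfl
      · rw [upd_ne hx, hf]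
    have hlt : (Set.range (upd f a c))ᶜ.ncard < n := by
      rw [← hn]
      apply Set.ncard_lt_ncard _ (Set.toFinite _)
      rw [Set.ssubset_iff_of_subset]
      · refine ⟨c, ?_, ?_⟩
        · rintro ⟨x, hx⟩
          exact hcr x hx
        · simp only [Set.mem_compl_iff, not_not]
          exact ⟨a, upd_self ..⟩
      · apply Set.compl_subset_compl.2
        rintro _ ⟨x, rfl⟩
        by_cases hx : x = a
        · refine ⟨b, ?_⟩
          rw [upd_ne (Ne.symm hab), hx, hfab]
        · exact ⟨x, upd_ne hx⟩
    have h1 := ih _ hlt (upd f a c) hf' rfl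
    have : f = (upd f a c) * (idm a b) := by
      funext x
      show _ = (upd f a c) ((idm a b) x)
      by_cases hx : x = a
      · subst hx
        rw [idm_self, upd_ne (Ne.symm hab), hfab]
      · rw [idm_ne hx]
        exact (upd_ne hx).symm
    rw [this]
    exact M.mul_mem h1 (hI a b hab hm)

theorem factor_right {f g : Function.End X} {ρ σ : Equiv.Perm (Quotient r)}
    (hf : Act r f (ρ * σ)) (hg : Act r g σ)
    (hk : ∀ x y, Quotient.mk r x = Quotient.mk r y → g x = g y → f x = f y) :
    ∃ h : Function.End X, Act r h ρ ∧ f = h * g := by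
  have key : ∀ y : X, ∃ z, Quotient.mk r z = ρ (Quotient.mk r y) ∧ ∀ x, g x = y → z = f x := by
    intro y
    by_cases h : ∃ x, g x = y
    · obtain ⟨x, rfl⟩ := h
      refine ⟨f x, ?_, fun x' hx' => ?_⟩
      · rw [hf, hg]; rfl
      · apply hk _ _ _ hx'.symm
        apply σ.injective
        rw [← hg, ← hg, hx']
    · obtain ⟨z, hz⟩ := blk_nonempty (ρ (Quotient.mk r y))
      exact ⟨z, hz, fun x hx => (h ⟨x, hx⟩).elim⟩
  choose h h1 h2 using key
  exact ⟨h, h1, funext fun x => (h2 (g x) x rfl).symm⟩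

/-- All maps acting as `π` on the blocks lie in `M`. -/
def AllIn (M : Submonoid (Function.End X)) (r : Setoid X) (π : Equiv.Perm (Quotient r)) : Prop :=
  ∀ f, Act r f π → f ∈ M

theorem exists_blk_inj {p q : Quotient r} (h : (blk r p).ncard ≤ (blk r q).ncard) :
    ∃ g : X → X, (∀ x ∈ blk r p, g x ∈ blk r q) ∧ Set.InjOn g (blk r p) := by
  have : (blk r p).encard ≤ (blk r q).encard := by
    rw [← Set.Finite.cast_ncard_eq (Set.toFinite _), ← Set.Finite.cast_ncard_eq (Set.toFinite _)]
    exact_mod_cast h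
  obtain ⟨x, hx⟩ := blk_nonempty q
  obtain ⟨g, h1, h2⟩ := @Set.Finite.exists_injOn_of_encard_le _ _ ⟨x⟩ _ _
    (Set.toFinite (blk r p)) this
  exact ⟨g, fun x hx => h1 hx, h2⟩

theorem AllIn.comp {ρ σ : Equiv.Perm (Quotient r)} (hρ : AllIn M r ρ) (hσ : AllIn M r σ)
    (hsz : ∀ q, (blk r q).ncard ≤ (blk r (σ q)).ncard ∨
      (blk r (ρ (σ q))).ncard ≤ (blk r (σ q)).ncard) : AllIn M r (ρ * σ) := by
  intro f hf
  have key : ∀ q, ∃ g : X → X, (∀ x ∈ blk r q, g x ∈ blk r (σ q)) ∧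
      ∀ x ∈ blk r q, ∀ y ∈ blk r q, g x = g y → f x = f y := by
    intro q
    rcases hsz q with h | h
    · obtain ⟨g, h1, h2⟩ := exists_blk_inj h
      exact ⟨g, h1, fun x hx y hy hxy => by rw [h2 hx hy hxy]⟩
    · obtain ⟨g, h1, h2⟩ := exists_blk_inj h
      have h3 : ∀ x ∈ blk r q, f x ∈ blk r (ρ (σ q)) := by
        intro x hx
        rw [mem_blk, hf, mem_blk.1 hx]; rfl
      exact ⟨fun x => g (f x), fun x hx => h1 _ (h3 x hx),
        fun x hx y hy hxy => h2 (h3 x hx) (h3 y hy) hxy⟩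
  choose g h1 h2 using key
  let G : Function.End X := fun x => g (Quotient.mk r x) x
  have hG : Act r G σ := fun x => h1 _ x rfl
  obtain ⟨h, hh, rfl⟩ := factor_right hf hG (by
    intro x y hxy hg
    have h3 : g (Quotient.mk r x) x = g (Quotient.mk r x) y := by
      have : G y = g (Quotient.mk r x) y := by rw [hxy]
      exact hg.trans this
    exact h2 _ x rfl y hxy.symm h3)
  exact M.mul_mem (hρ h hh) (hσ G hG)

theorem AllIn.of_good {t : Function.End X} {ρ : Equiv.Perm (Quotient r)} (h1 : AllIn M r 1)
    (htM : t ∈ M) (ht : Act r t ρ)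
    (hg : ∀ q, Set.InjOn t (blk r q) ∨ ∀ y ∈ blk r (ρ q), ∃ x ∈ blk r q, t x = y) :
    AllIn M r ρ := by
  intro f hf
  have key : ∀ x, ∃ z, Quotient.mk r z = Quotient.mk r x ∧
      (¬ Set.InjOn t (blk r (Quotient.mk r x)) → t z = f x) ∧
      (Set.InjOn t (blk r (Quotient.mk r x)) → z = x) := by
    intro x
    by_cases h : Set.InjOn t (blk r (Quotient.mk r x))
    · exact ⟨x, rfl, fun h' => (h' h).elim, fun _ => rfl⟩
    · obtain ⟨z, hz, hz'⟩ := (hg (Quotient.mk r x)).resolve_left h (f x) (hf x)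
      exact ⟨z, hz, fun _ => hz', fun h' => (h h').elim⟩
  obtain ⟨e, he1, he2, he3⟩ : ∃ e : Function.End X,
      (∀ x, Quotient.mk r (e x) = Quotient.mk r x) ∧
      (∀ x, ¬ Set.InjOn t (blk r (Quotient.mk r x)) → t (e x) = f x) ∧
      (∀ x, Set.InjOn t (blk r (Quotient.mk r x)) → e x = x) := by
    choose e he1 he2 he3 using key
    exact ⟨e, he1, he2, he3⟩
  have he : Act r e 1 := he1
  obtain ⟨h, hh, hf'⟩ := factor_right (f := f) (g := t * e) (ρ := 1) (σ := ρ)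
    (by simpa using hf) (by simpa using ht.mul he) (by
      intro x y hxy hte
      replace hte : t (e x) = t (e y) := hte
      by_cases h : Set.InjOn t (blk r (Quotient.mk r x))
      · have h' := h
        rw [hxy] at h'
        rw [he3 x h, he3 y h'] at hte
        rw [h rfl hxy.symm hte]
      · have h' := h
        rw [hxy] at h'
        rw [he2 x h, he2 y h'] at hte
        exact hte)
  rw [hf']
  exact M.mul_mem (h1 h hh) (M.mul_mem htM (h1 _ he))

theorem allIn_swap_trans [DecidableEq (Quotient r)] {B E C : Quotient r} (hBE : B ≠ E)
    (hEC : E ≠ C) (hBC : B ≠ C) (h1 : (blk r B).ncard ≤ (blk r E).ncard)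
    (h2 : (blk r E).ncard ≤ (blk r C).ncard) (H1 : AllIn M r (Equiv.swap B E))
    (H2 : AllIn M r (Equiv.swap E C)) : AllIn M r (Equiv.swap B C) := by
  have e1 : Equiv.swap B C = Equiv.swap E C * (Equiv.swap B E * Equiv.swap E C) := by
    ext q
    simp only [Equiv.Perm.mul_apply, Equiv.swap_apply_def]
    grind
  rw [e1]
  refine H2.comp (H1.comp H2 ?_) ?_
  · intro q
    simp only [Equiv.swap_apply_def]
    grind
  · intro q
    simp only [Equiv.Perm.mul_apply, Equiv.swap_apply_def]
    grind

theorem allIn_all [DecidableEq (Quotient r)] (h1 : AllIn M r 1)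
    (H : ∀ p q : Quotient r, (blk r p).ncard ≤ (blk r q).ncard → AllIn M r (Equiv.swap p q))
    (π : Equiv.Perm (Quotient r)) : AllIn M r π := by
  classical
  have : Fintype (Quotient r) := Fintype.ofFinite _
  induction hn : π.support.card using Nat.strong_induction_on generalizing π with
  | _ n ih =>
  by_cases hπ : π = 1
  · rw [hπ]; exact h1
  have hne : π.support.Nonempty := by
    rw [Finset.nonempty_iff_ne_empty]
    intro h
    exact hπ (Equiv.Perm.support_eq_empty_iff.1 h)
  obtain ⟨q, hq, hmin⟩ := Finset.exists_min_image π.support (fun q => (blk r q).ncard) hne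
  have hq' : π q ≠ q := Equiv.Perm.mem_support.1 hq
  have hlt := Equiv.Perm.card_support_swap_mul hq'
  have e1 : Equiv.swap q (π q) * π = π * Equiv.swap (π⁻¹ q) q := by
    rw [Equiv.swap_mul_eq_mul_swap]
    simp
  have IH := ih _ (hn ▸ hlt) (Equiv.swap q (π q) * π) rfl
  have hD : π⁻¹ q ∈ π.support := by
    rw [Equiv.Perm.mem_support]
    intro h
    have h' : q = π⁻¹ q := (Equiv.apply_symm_apply π q).symm.trans h
    exact hq' (Equiv.Perm.eq_inv_iff_eq.1 h')
  have hDsz := hmin _ hD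
  have H' := H q (π⁻¹ q) hDsz
  rw [Equiv.swap_comm] at H'
  have e2 : π = (Equiv.swap q (π q) * π) * Equiv.swap (π⁻¹ q) q := by
    rw [e1, mul_assoc, Equiv.swap_mul_self, mul_one]
  rw [e2]
  refine IH.comp H' ?_
  intro p
  by_cases hp : p = q
  · subst hp
    left
    rw [Equiv.swap_apply_right]
    exact hDsz
  · by_cases hp' : p = π⁻¹ q
    · subst hp'
      right
      rw [Equiv.swap_apply_left]
      simp
    · left
      rw [Equiv.swap_apply_of_ne_of_ne hp' hp]

theorem swap_size [DecidableEq (Quotient r)] {p q : Quotient r}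
    (h : (blk r p).ncard = (blk r q).ncard) (s : Quotient r) :
    (blk r (Equiv.swap p q s)).ncard = (blk r s).ncard := by
  rw [Equiv.swap_apply_def]
  grind

theorem allIn_swap_eq [DecidableEq (Quotient r)] (hS : SXP r ⊆ M) (h1 : AllIn M r 1) {p q : Quotient r}
    (h : (blk r p).ncard = (blk r q).ncard) : AllIn M r (Equiv.swap p q) := by
  obtain ⟨u, hu, ha, -⟩ := exists_unit (Equiv.swap p q) (swap_size h) id ∅ (by simp) (by simp)
  exact AllIn.of_good h1 (hS hu) ha (fun q => Or.inl (((sxp_iff.1 hu).1.1).injOn))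

/-- Normalized version of an element of `ℬᵢ`. -/
theorem memB_normal [DecidableEq (Quotient r)] (hS : SXP r ⊆ M) {a b : ℕ} (hab : a < b) {f : Function.End X}
    (hfM : f ∈ M) (hf : memB r a b f) {qB qC : Quotient r} (hqB : (blk r qB).ncard = a)
    (hqC : (blk r qC).ncard = b) :
    ∃ t ∈ M, Act r t (Equiv.swap qB qC) ∧ Set.InjOn t (blk r qB) ∧
      (∀ y ∈ blk r qB, ∃ x ∈ blk r qC, t x = y) ∧
      ∀ x, Quotient.mk r x ≠ qB → Quotient.mk r x ≠ qC → t x = x := by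
  obtain ⟨hfS, B, B', C, C', hB, hB', hC, hC', cB, cB', cC, cC', hinj, hBC, hCB, hrest⟩ := hf
  obtain ⟨π, hπ⟩ := sigma_iff.1 hfS
  obtain ⟨B, rfl⟩ := mem_classes_iff.1 hB
  obtain ⟨B', rfl⟩ := mem_classes_iff.1 hB'
  obtain ⟨C, rfl⟩ := mem_classes_iff.1 hC
  obtain ⟨C', rfl⟩ := mem_classes_iff.1 hC'
  have hπB : π B = C := by
    obtain ⟨x, hx⟩ := blk_nonempty B
    rw [← mem_blk.1 hx, ← hπ]
    exact hBC ⟨x, hx, rfl⟩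
  have hπC : π C' = B' := by
    obtain ⟨x, hx⟩ := blk_nonempty C'
    rw [← mem_blk.1 hx, ← hπ]
    have : f x ∈ f '' blk r C' := ⟨x, hx, rfl⟩
    rw [hCB] at this
    exact this
  have hne : ∀ {p q : Quotient r}, (blk r p).ncard = a → (blk r q).ncard = b → p ≠ q := by
    rintro p q h1 h2 rfl
    omega
  -- the source adjustment
  let σ : Equiv.Perm (Quotient r) := Equiv.swap qB B * Equiv.swap qC C'
  have hσB : σ qB = B := by
    show Equiv.swap qB B (Equiv.swap qC C' qB) = B
    rw [Equiv.swap_apply_of_ne_of_ne (hne hqB hqC) (hne hqB cC'), Equiv.swap_apply_left]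
  have hσC : σ qC = C' := by
    show Equiv.swap qB B (Equiv.swap qC C' qC) = C'
    rw [Equiv.swap_apply_left, Equiv.swap_apply_of_ne_of_ne (hne hqB cC').symm (hne cB cC').symm]
  have hσs : ∀ q, (blk r (σ q)).ncard = (blk r q).ncard := by
    intro q
    show (blk r (Equiv.swap qB B (Equiv.swap qC C' q))).ncard = _
    rw [swap_size (by omega), swap_size (by omega)]
  obtain ⟨v, hvS, hv, -⟩ := exists_unit σ hσs id ∅ (by simp) (by simp)
  have hvb := (sxp_iff.1 hvS).1
  have hF : Act r (f * v) (π * σ) := hπ.mul hv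
  have hothers : ∀ q, q ≠ qB → q ≠ qC →
      (blk r (π (σ q))).ncard = (blk r q).ncard ∧ Set.InjOn f (blk r (σ q)) := by
    intro q h1 h2
    have h3 : σ q ≠ B := fun h => h1 (σ.injective (h.trans hσB.symm))
    have h4 : σ q ≠ C' := fun h => h2 (σ.injective (h.trans hσC.symm))
    obtain ⟨E, hE, hE1, hE2, hE3⟩ := hrest (blk r (σ q)) (mem_classes_iff.2 ⟨_, rfl⟩)
      (fun h => h3 (blk_inj h)) (fun h => h4 (blk_inj h))
    obtain ⟨E, rfl⟩ := mem_classes_iff.1 hE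
    have : π (σ q) = E := by
      obtain ⟨x, hx⟩ := blk_nonempty (σ q)
      rw [← mem_blk.1 hx, ← hπ]
      have : f x ∈ f '' blk r (σ q) := ⟨x, hx, rfl⟩
      rw [hE1] at this
      exact this
    rw [this, hE3, hσs]
    exact ⟨rfl, hE2⟩
  -- the target adjustment
  obtain ⟨w, hwS, hw, hwe⟩ := exists_unit (r := r) (π * σ * Equiv.swap qB qC)
    (by
      intro q
      show (blk r (π (σ (Equiv.swap qB qC q)))).ncard = _
      by_cases h1 : q = qB
      · rw [h1, Equiv.swap_apply_left, hσC, hπC, cB', hqB]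
      · by_cases h2 : q = qC
        · rw [h2, Equiv.swap_apply_right, hσB, hπB, cC, hqC]
        · rw [Equiv.swap_apply_of_ne_of_ne h1 h2]
          exact (hothers q h1 h2).1)
    (f * v) {x | Quotient.mk r x ≠ qB ∧ Quotient.mk r x ≠ qC}
    (by
      rintro x ⟨h1, h2⟩
      rw [hF x, Equiv.Perm.mul_apply (π * σ), Equiv.swap_apply_of_ne_of_ne h1 h2])
    (by
      rintro x ⟨h1, h2⟩ y ⟨h3, h4⟩ hxy
      have hm : Quotient.mk r x = Quotient.mk r y := by
        apply (π * σ).injective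
        rw [← hF, ← hF, hxy]
      apply hvb.1
      exact (hothers _ h1 h2).2 (hv x) ((hv y).trans (by rw [hm])) hxy)
  obtain ⟨z, hzS, hz, hwz, hzw⟩ := sxp_inv hwS hw
  have hzb := (sxp_iff.1 hzS).1
  refine ⟨z * (f * v), M.mul_mem (hS hzS) (M.mul_mem hfM (hS hvS)), ?_, ?_, ?_, ?_⟩
  · have := hz.mul hF
    have e : (π * σ * Equiv.swap qB qC)⁻¹ * (π * σ) = Equiv.swap qB qC := by
      simp [mul_assoc]
    rwa [e] at this
  · intro x hx y hy hxy
    apply hvb.1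
    apply hinj _ _ (hzb.1 hxy)
    · rw [mem_blk, hv, mem_blk.1 hx, hσB]
    · rw [mem_blk, hv, mem_blk.1 hy, hσB]
  · intro y hy
    have h1 : w y ∈ blk r B' := by
      rw [mem_blk, hw, mem_blk.1 hy]
      show π (σ (Equiv.swap qB qC qB)) = _
      rw [Equiv.swap_apply_left, hσC, hπC]
    rw [← hCB] at h1
    obtain ⟨c, hc, hcy⟩ := h1
    obtain ⟨x, rfl⟩ := hvb.2 c
    refine ⟨x, ?_, ?_⟩
    · apply σ.injective
      rw [← hv, hσC]
      exact hc
    · show z (f (v x)) = y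
      rw [hcy, hzw]
  · intro x h1 h2
    have := hwe x ⟨h1, h2⟩
    show z ((f * v) x) = x
    rw [← this, hzw]

/-- Normalized elements of `ℬᵢ` with consecutive sizes give a drop of rank one. -/
theorem memB_drop [DecidableEq (Quotient r)] {t : Function.End X} (hS : SXP r ⊆ M) (htM : t ∈ M)
    {qB qC : Quotient r} (hne : qB ≠ qC) (hc : (blk r qC).ncard = (blk r qB).ncard + 1)
    (ht : Act r t (Equiv.swap qB qC)) (hinj : Set.InjOn t (blk r qB))
    (hsurj : ∀ y ∈ blk r qB, ∃ x ∈ blk r qC, t x = y)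
    (hid : ∀ x, Quotient.mk r x ≠ qB → Quotient.mk r x ≠ qC → t x = x) :
    ∃ g ∈ M, Act r g 1 ∧ (g '' blk r qC).ncard + 1 = (blk r qC).ncard ∧
      ∀ p, p ≠ qC → Set.InjOn g (blk r p) := by
  classical
  have hBC : ∀ x ∈ blk r qB, t x ∈ blk r qC := by
    intro x hx
    rw [mem_blk, ht, mem_blk.1 hx, Equiv.swap_apply_left]
  have hCB : ∀ x ∈ blk r qC, t x ∈ blk r qB := by
    intro x hx
    rw [mem_blk, ht, mem_blk.1 hx, Equiv.swap_apply_right]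
  have key : ∀ y, ∃ z, (∀ x ∈ blk r qB, t x = y → z ∈ blk r qC ∧ t z = x) ∧
      (Quotient.mk r y ≠ qC → z = y) := by
    intro y
    by_cases h : ∃ x ∈ blk r qB, t x = y
    · obtain ⟨x, hx, rfl⟩ := h
      obtain ⟨z, hz, hzx⟩ := hsurj x hx
      refine ⟨z, fun x' hx' h => ?_, fun h => (h (hBC x hx)).elim⟩
      rw [hinj hx' hx h]
      exact ⟨hz, hzx⟩
    · exact ⟨y, fun x hx hxy => (h ⟨x, hx, hxy⟩).elim, fun _ => rfl⟩
  choose s hs1 hs2 using key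
  obtain ⟨p, hpS, hp, hpe⟩ := exists_unit (r := r) 1 (fun _ => rfl) s
    (t '' blk r qB ∪ {x | Quotient.mk r x ≠ qC})
    (by
      rintro y (⟨x, hx, rfl⟩ | hy)
      · exact ((hs1 _ x hx rfl).1).trans (hBC x hx).symm
      · rw [hs2 y hy]; rfl)
    (by
      rintro y (⟨x, hx, rfl⟩ | hy) y' (⟨x', hx', rfl⟩ | hy') h
      · have h1 := (hs1 _ x hx rfl).2
        have h2 := (hs1 _ x' hx' rfl).2
        rw [← h1, ← h2, h]
      · have h1 := (hs1 _ x hx rfl).1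
        rw [h, hs2 y' hy'] at h1
        exact (hy' h1).elim
      · have h1 := (hs1 _ x' hx' rfl).1
        rw [← h, hs2 y hy] at h1
        exact (hy h1).elim
      · rw [hs2 y hy, hs2 y' hy'] at h
        exact h)
  have hgB : ∀ x ∈ blk r qB, t (p (t x)) = x := by
    intro x hx
    rw [hpe (t x) (Or.inl ⟨x, hx, rfl⟩)]
    exact (hs1 _ x hx rfl).2
  have hpid : ∀ x, Quotient.mk r x ≠ qC → p x = x := by
    intro x hx
    rw [hpe x (Or.inr hx), hs2 x hx]
  refine ⟨t * (p * t), M.mul_mem htM (M.mul_mem (hS hpS) htM), ?_, ?_, ?_⟩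
  · have := ht.mul (hp.mul ht)
    rwa [one_mul, Equiv.swap_mul_self] at this
  · have : (t * (p * t) : Function.End X) '' blk r qC = t '' blk r qB := by
      ext y
      constructor
      · rintro ⟨x, hx, rfl⟩
        refine ⟨t x, hCB x hx, ?_⟩
        show t (t x) = t (p (t x))
        rw [hpid (t x)]
        rw [mem_blk.1 (hCB x hx)]
        exact hne
      · rintro ⟨b, hb, rfl⟩
        obtain ⟨x, hx, rfl⟩ := hsurj b hb
        refine ⟨x, hx, ?_⟩
        show t (p (t x)) = t (t x)
        rw [hpid (t x)]
        rw [mem_blk.1 (hCB x hx)]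
        exact hne
    rw [this, Set.InjOn.ncard_image hinj, hc]
  · intro q hq x hx y hy hxy
    replace hxy : t (p (t x)) = t (p (t y)) := hxy
    by_cases hqB : q = qB
    · subst hqB
      rwa [hgB x hx, hgB y hy] at hxy
    · have : ∀ x ∈ blk r q, t (p (t x)) = x := by
        intro x hx
        have h1 : Quotient.mk r x ≠ qB := by rw [mem_blk.1 hx]; exact hqB
        have h2 : Quotient.mk r x ≠ qC := by rw [mem_blk.1 hx]; exact hq
        rw [hid x h1 h2, hpid x h2, hid x h1 h2]
      rwa [this x hx, this y hy] at hxy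

end helpers

/-- (Here `d 1 < … < d R` are the distinct block sizes of the
partition.)  If `U ⊆ Σ(X,P)` contains an element of `ℬᵢ` for every
`1 ≤ i ≤ R − 1`, and an element of `𝒞ᵢ` for every `i ∈ {1, …, R}` with either
`i = 1` and `d 1 ≥ 2`, or `i ≥ 2` and `d i − d (i−1) ≥ 2`, then `S(X,P) ∪ U`
generates the monoid `Σ(X,P)`. -/
theorem SigmaXP_generated_by_representatives {X : Type*} [Fintype X] [Nonempty X]
    (r : Setoid X)
    (R : ℕ) (d : ℕ → ℕ)
    (hdmono : ∀ i, 1 ≤ i → i + 1 ≤ R → d i < d (i + 1))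
    (hdsizes : ∀ s, blockCount r s ≠ 0 ↔ ∃ i, 1 ≤ i ∧ i ≤ R ∧ d i = s)
    (U : Set (Function.End X)) (hU : U ⊆ SigmaSet r)
    (hUB : ∀ i, 1 ≤ i → i + 1 ≤ R → ∃ f ∈ U, memB r (d i) (d (i + 1)) f)
    (hUC : ∀ i, 1 ≤ i → i ≤ R →
      ((i = 1 ∧ 2 ≤ d 1) ∨ (2 ≤ i ∧ d (i - 1) + 2 ≤ d i)) →
      ∃ f ∈ U, memC r (d i) f) :
    (Submonoid.closure (SXP r ∪ U) : Set (Function.End X)) = SigmaSet r := by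
  classical
  set M := Submonoid.closure (SXP r ∪ U) with hM
  have hS : SXP r ⊆ M := fun f hf => Submonoid.subset_closure (Or.inl hf)
  have hUM : U ⊆ M := fun f hf => Submonoid.subset_closure (Or.inr hf)
  have hmono : ∀ n i, 1 ≤ i → i + n ≤ R → d i ≤ d (i + n) := by
    intro n
    induction n with
    | zero => intro i _ _; exact le_rfl
    | succ n ih =>
      intro i h1 h2
      have := ih i h1 (by omega)
      have := hdmono (i + n) (by omega) (by omega)
      have e : i + (n + 1) = i + n + 1 := by omega
      rw [e]
      omega
  have hex : ∀ i, 1 ≤ i → i ≤ R → ∃ q, (blk r q).ncard = d i := by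
    intro i h1 h2
    have h := (hdsizes (d i)).2 ⟨i, h1, h2, rfl⟩
    obtain ⟨B, hB, hc⟩ := Set.nonempty_of_ncard_ne_zero h
    obtain ⟨q, rfl⟩ := mem_classes_iff.1 hB
    exact ⟨q, hc⟩
  have hidx : ∀ q, ∃ i, 1 ≤ i ∧ i ≤ R ∧ d i = (blk r q).ncard := by
    intro q
    apply (hdsizes _).1
    have h : blk r q ∈ {B | B ∈ Setoid.classes r ∧ B.ncard = (blk r q).ncard} :=
      ⟨mem_classes_iff.2 ⟨q, rfl⟩, rfl⟩
    exact Set.ncard_ne_zero_of_mem h (Set.toFinite _)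
  have hadj : ∀ i, 1 ≤ i → i + 1 ≤ R → ∀ qB qC : Quotient r, (blk r qB).ncard = d i →
      (blk r qC).ncard = d (i + 1) → ∃ t ∈ M, Act r t (Equiv.swap qB qC) ∧
      Set.InjOn t (blk r qB) ∧ (∀ y ∈ blk r qB, ∃ x ∈ blk r qC, t x = y) ∧
      ∀ x, Quotient.mk r x ≠ qB → Quotient.mk r x ≠ qC → t x = x := by
    intro i h1 h2 qB qC hB hC
    obtain ⟨f, hfU, hf⟩ := hUB i h1 h2
    exact memB_normal hS (hdmono i h1 h2) (hUM hfU) hf hB hC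
  -- rank-one drops in some block of each size at least two
  have hdrop : ∀ i, 1 ≤ i → i ≤ R → 2 ≤ d i → ∃ q, (blk r q).ncard = d i ∧
      ∃ a ∈ blk r q, ∃ b ∈ blk r q, a ≠ b ∧ idm a b ∈ M := by
    intro i h1 h2 h3
    by_cases hc : (i = 1 ∧ 2 ≤ d 1) ∨ (2 ≤ i ∧ d (i - 1) + 2 ≤ d i)
    · obtain ⟨f, hfU, hfS, hsz, B, hB, hBc, hBd, hBi⟩ := hUC i h1 h2 hc
      obtain ⟨π, hπ⟩ := sigma_iff.1 hfS
      obtain ⟨q, rfl⟩ := mem_classes_iff.1 hB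
      refine ⟨q, hBc, drop_idem hS (hUM hfU) hπ q ?_ (by omega) ?_⟩
      · obtain ⟨E, hE, hE1, hE2⟩ := hsz _ hB
        obtain ⟨E, rfl⟩ := mem_classes_iff.1 hE
        obtain ⟨x, hx⟩ := blk_nonempty q
        have : π q = E := by
          rw [← mem_blk.1 hx, ← hπ]
          exact hE2 ⟨x, hx, rfl⟩
        rw [this, hE1]
      · intro p hp
        exact hBi _ (mem_classes_iff.2 ⟨p, rfl⟩) (fun h => hp (blk_inj h))
    · have hi : 2 ≤ i := by
        by_contra h
        have : i = 1 := by omega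
        subst this
        exact hc (Or.inl ⟨rfl, h3⟩)
      obtain ⟨j, rfl⟩ : ∃ j, i = j + 1 := ⟨i - 1, by omega⟩
      have hlt := hdmono j (by omega) h2
      have hd : d (j + 1) = d j + 1 := by
        by_contra h
        apply hc
        right
        refine ⟨hi, ?_⟩
        rw [Nat.add_sub_cancel]
        omega
      obtain ⟨qB, hqB⟩ := hex j (by omega) (by omega)
      obtain ⟨qC, hqC⟩ := hex (j + 1) h1 h2
      have hne : qB ≠ qC := by
        rintro rfl
        omega
      obtain ⟨t, htM, ht, ht1, ht2, ht3⟩ := hadj j (by omega) h2 qB qC hqB hqC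
      obtain ⟨g, hgM, hg, hg1, hg2⟩ := memB_drop hS htM hne (by omega) ht ht1 ht2 ht3
      exact ⟨qC, hqC, drop_idem hS hgM hg qC rfl hg1 hg2⟩
  have hI : ∀ x y : X, x ≠ y → Quotient.mk r x = Quotient.mk r y → idm x y ∈ M := by
    intro x y hxy hr
    obtain ⟨i, h1, h2, h3⟩ := hidx (Quotient.mk r x)
    have h4 : 2 ≤ d i := by
      rw [h3]
      have : 1 < (blk r (Quotient.mk r x)).ncard :=
        (Set.one_lt_ncard (Set.toFinite _)).2 ⟨x, rfl, y, hr.symm, hxy⟩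
      exact this
    obtain ⟨q, hq, a, ha, b, hb, hab, hMab⟩ := hdrop i h1 h2 h4
    refine idem_transport hS hab ((mem_blk.1 ha).trans (mem_blk.1 hb).symm) hMab hxy hr ?_
    rw [mem_blk.1 ha, hq, h3]
  have hone : AllIn M r 1 := fun f hf => fix_mem hS hI f hf
  have hadj' : ∀ i, 1 ≤ i → i + 1 ≤ R → ∀ qB qC : Quotient r, (blk r qB).ncard = d i →
      (blk r qC).ncard = d (i + 1) → AllIn M r (Equiv.swap qB qC) := by
    intro i h1 h2 qB qC hB hC
    obtain ⟨t, htM, ht, ht1, ht2, ht3⟩ := hadj i h1 h2 qB qC hB hC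
    refine AllIn.of_good hone htM ht (fun q => ?_)
    by_cases hq : q = qB
    · subst hq
      exact Or.inl ht1
    · by_cases hq' : q = qC
      · subst hq'
        right
        rw [Equiv.swap_apply_right]
        exact ht2
      · left
        intro x hx y hy hxy
        rw [ht3 x (by rw [mem_blk.1 hx]; exact hq) (by rw [mem_blk.1 hx]; exact hq'),
          ht3 y (by rw [mem_blk.1 hy]; exact hq) (by rw [mem_blk.1 hy]; exact hq')] at hxy
        exact hxy
  have hswapn : ∀ n i, 1 ≤ i → i + n ≤ R → ∀ p q : Quotient r, (blk r p).ncard = d i →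
      (blk r q).ncard = d (i + n) → AllIn M r (Equiv.swap p q) := by
    intro n
    induction n with
    | zero => intro i h1 h2 p q hp hq; exact allIn_swap_eq hS hone (hp.trans hq.symm)
    | succ n ih =>
      intro i h1 h2 p q hp hq
      obtain ⟨E, hE⟩ := hex (i + n) (by omega) (by omega)
      have H2 := hadj' (i + n) (by omega) (by omega) E q hE hq
      have hlt := hdmono (i + n) (by omega) (by omega)
      have hle := hmono n i h1 (by omega)
      have hq' : (blk r q).ncard = d (i + n + 1) := hq
      by_cases hpE : p = E
      · rw [hpE]; exact H2
      · refine allIn_swap_trans hpE ?_ ?_ (by omega) (by omega)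
          (ih i h1 (by omega) p E hp hE) H2
        · rintro rfl
          omega
        · rintro rfl
          omega
  have hlt' : ∀ i j, 1 ≤ j → i ≤ R → j ≤ R → d i ≤ d j → 1 ≤ i → j < i → False := by
    intro i j h1 h2 h3 h4 h5 h6
    have h7 := hdmono j h1 (by omega)
    have h8 := hmono (i - (j + 1)) (j + 1) (by omega) (by omega)
    rw [show j + 1 + (i - (j + 1)) = i by omega] at h8
    omega
  have hall := allIn_all hone (fun p q hpq => by
    obtain ⟨i, i1, i2, i3⟩ := hidx p
    obtain ⟨j, j1, j2, j3⟩ := hidx q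
    have hij : i ≤ j := by
      by_contra h
      exact hlt' i j j1 i2 j2 (by omega) i1 (by omega)
    exact hswapn (j - i) i i1 (by omega) p q i3.symm
      (by rw [← j3]; congr 1; omega))
  apply Set.Subset.antisymm
  · intro f hf
    induction (hf : f ∈ Submonoid.closure (SXP r ∪ U)) using Submonoid.closure_induction with
    | mem x hx =>
      rcases hx with hx | hx
      · exact sigma_iff.2 (sxp_iff.1 hx).2
      · exact hU hx
    | one => exact sigma_iff.2 ⟨1, fun x => rfl⟩
    | mul x y _ _ hx hy =>
      obtain ⟨π, h1⟩ := sigma_iff.1 hx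
      obtain ⟨ρ, h2⟩ := sigma_iff.1 hy
      exact sigma_iff.2 ⟨_, h1.mul h2⟩
  · intro f hf
    obtain ⟨π, h⟩ := sigma_iff.1 hf
    exact hall π f h
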